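/- For every valid layout ℓ: if ℓ is deserializable, then for every position j at which ℓ has the item V there exist a position p and naturals o, s such that the item at position p of ℓ is the pointer P o s and o ≤ j < o + s (i.e., j lies in the range of some pointer occurring in ℓ). -/

import Mathlib

/-- A layout item: fixed-length field, variable-length field, or pointer `P o s`
with offset `o` and span `s`. -/
inductive Item : Type where
  | F : Item
  | V : Item
  | P : ℕ → ℕ → Item
deriving DecidableEq

/-- A layout is valid if every pointer `P o s` occurring in it satisfies
`o < |ℓ|` and `s ≤ |ℓ| - o`. -/
def ValidLayout (ℓ : List Item) : Prop :=
  ∀ o s : ℕ, Item.P o s ∈ ℓ → o < ℓ.length ∧ s ≤ ℓ.length - o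

/-- Facts the parser can know about positions of the layout. -/
inductive ParseFact : Type where
  | Beg : ℕ → ParseFact
  | Len : ℕ → ParseFact
  | Val : ℕ → ParseFact
deriving DecidableEq

/-- The smallest set of facts closed under the parser's inference rules. -/
inductive Derivable (ℓ : List Item) : ParseFact → Prop where
  | begin : Derivable ℓ (.Beg 0)
  | fieldF (i : ℕ) : ℓ[i]? = some .F → Derivable ℓ (.Len i)
  | fieldP (i o s : ℕ) : ℓ[i]? = some (.P o s) → Derivable ℓ (.Len i)
  | forwardVal (i : ℕ) : Derivable ℓ (.Beg i) → Derivable ℓ (.Len i) → Derivable ℓ (.Val i)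
  | forwardBeg (i : ℕ) : Derivable ℓ (.Beg i) → Derivable ℓ (.Len i) → Derivable ℓ (.Beg (i+1))
  | backwardBeg (i : ℕ) : Derivable ℓ (.Beg (i+1)) → Derivable ℓ (.Len i) → Derivable ℓ (.Beg i)
  | backwardVal (i : ℕ) : Derivable ℓ (.Beg (i+1)) → Derivable ℓ (.Len i) → Derivable ℓ (.Val i)
  | join (i : ℕ) : Derivable ℓ (.Beg i) → Derivable ℓ (.Beg (i+1)) → Derivable ℓ (.Len i)
  | jumpRight (i o s : ℕ) : ℓ[i]? = some (.P o s) → Derivable ℓ (.Val i) →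
      Derivable ℓ (.Beg o) → Derivable ℓ (.Beg (o+s))
  | jumpLeft (i o s : ℕ) : ℓ[i]? = some (.P o s) → Derivable ℓ (.Val i) →
      Derivable ℓ (.Beg (o+s)) → Derivable ℓ (.Beg o)

/-- A layout is deserializable if the length of every varfield is derivable. -/
def Deserializable (ℓ : List Item) : Prop :=
  ∀ j : ℕ, ℓ[j]? = some Item.V → Derivable ℓ (.Len j)

/-- Necessary condition for deserializability: every varfield position lies in the
range of some pointer occurring in the layout. -/
theorem necessary_bounding (ℓ : List Item) (hval : ValidLayout ℓ)
    (hdes : Deserializable ℓ) (j : ℕ) (hj : ℓ[j]? = some Item.V) :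
    ∃ p o s : ℕ, ℓ[p]? = some (Item.P o s) ∧ o ≤ j ∧ j < o + s := by
  by_contra hno
  have key : ∀ f, Derivable ℓ f → (match f with
      | .Beg i => i ≤ j
      | .Len i => i ≠ j
      | .Val _ => True) := by
    intro f hf
    induction hf with
    | begin => exact Nat.zero_le _
    | fieldF i h => intro e; subst e; simp [h] at hj
    | fieldP i o s h => intro e; subst e; simp [h] at hj
    | forwardVal i _ _ _ _ => trivial
    | forwardBeg i _ _ h1 h2 => simp only at h1 h2 ⊢; omega
    | backwardBeg i _ _ h1 h2 => simp only at h1 h2 ⊢; omega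
    | backwardVal i _ _ _ _ => trivial
    | join i _ _ h1 h2 => simp only at h1 h2 ⊢; omega
    | jumpRight i o s h _ _ _ h2 =>
      simp only at h2 ⊢
      by_contra hc
      exact hno ⟨i, o, s, h, h2, by omega⟩
    | jumpLeft i o s h _ _ _ h2 => simp only at h2 ⊢; omega
  exact key _ (hdes j hj) rfl
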